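/- Let X be an implicative-orthomodular algebra. A nonempty subset F ⊆ X is a filter of X if and only if it satisfies: (F₁) x, y ∈ F implies x ⊙ y ∈ F, and (F₃) x ∈ F and y ∈ X imply y→x ∈ F. -/

import Mathlib

/-!
Since `x ≤_Q (y → x)` by (IOM), every filter satisfies (F₃). Conversely, (IOM) makes `x ≤_Q y` imply
`y = (y → x) → x`: the hypothesis says `x* = (x* → y*) → y*`, so (IOM) for `y*` and `x* → y*` reads
`y* ⊓ x* = y*`, and the negation of this is `(y → x) → x = y`. Hence `y` has the form `z → x`, and
(F₃) gives upward closure.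
-/

/-- An involutive BE algebra `(X, →, 0, 1)`. -/
structure InvBE (X : Type*) where
  imp : X → X → X
  one : X
  zero : X
  imp_self : ∀ x, imp x x = one
  imp_one : ∀ x, imp x one = one
  one_imp : ∀ x, imp one x = x
  exchange : ∀ x y z, imp x (imp y z) = imp y (imp x z)
  zero_imp : ∀ x, imp zero x = one
  imp_involutive : ∀ x, imp (imp x zero) zero = x

namespace InvBE

variable {X : Type*} (A : InvBE X)

/-- `x* := x → 0`. -/
def neg (x : X) : X := A.imp x A.zero

/-- `x ⊓ y := ((x* → y*) → y*)*`. -/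
def inf (x y : X) : X := A.neg (A.imp (A.imp (A.neg x) (A.neg y)) (A.neg y))

/-- `x ∪ y := (x → y) → y`. -/
def sup (x y : X) : X := A.imp (A.imp x y) y

/-- `x ⊙ y := (x → y*)*`. -/
def odot (x y : X) : X := A.neg (A.imp x (A.neg y))

/-- `x ⊕ y := (x* ⊙ y*)*`. -/
def oplus (x y : X) : X := A.neg (A.odot (A.neg x) (A.neg y))

/-- `x ≤_Q y` iff `x = x ⊓ y`. -/
def leQ (x y : X) : Prop := x = A.inf x y

/-- `x ≤ y` iff `x → y = 1`. -/
def le (x y : X) : Prop := A.imp x y = A.one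

/-- (IOM): `x ⊓ (y → x) = x` for all `x, y`. -/
def IOM : Prop := ∀ x y, A.inf x (A.imp y x) = x

/-- (QW): `x → ((x ⊓ y) ⊓ (z ⊓ x)) = (x → y) ⊓ (x → z)` for all `x, y, z`. -/
def QW : Prop :=
  ∀ x y z, A.imp x (A.inf (A.inf x y) (A.inf z x)) = A.inf (A.imp x y) (A.imp x z)

/-- A filter: nonempty, closed under `⊙`, upward closed for `≤_Q`. -/
def IsFilter (F : Set X) : Prop :=
  F.Nonempty ∧ (∀ x ∈ F, ∀ y ∈ F, A.odot x y ∈ F) ∧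
    (∀ x ∈ F, ∀ y : X, A.leQ x y → y ∈ F)

/-- A deductive system: contains `1` and is closed under modus ponens. -/
def IsDS (F : Set X) : Prop :=
  A.one ∈ F ∧ ∀ x y : X, x ∈ F → A.imp x y ∈ F → y ∈ F

/-- `pow x n` is the `⊙`-product of `n + 1` copies of `x`, i.e. `x^(n+1)`. -/
def pow (x : X) : ℕ → X
  | 0 => x
  | n + 1 => A.odot x (pow x n)

/-- A maximal filter: proper and not contained in any other proper filter. -/
def IsMaximalFilter (F : Set X) : Prop :=
  A.IsFilter F ∧ F ≠ Set.univ ∧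
    ∀ G : Set X, A.IsFilter G → F ⊆ G → G ≠ Set.univ → G = F

/-- A strongly maximal filter: for every `x ∉ F` there is `n ≥ 1` with `(xⁿ)* ∈ F`. -/
def IsStronglyMaximalFilter (F : Set X) : Prop :=
  A.IsFilter F ∧ ∀ x : X, x ∉ F → ∃ n : ℕ, A.neg (A.pow x n) ∈ F

/-- `x ≡_F y` iff there is `f` with `x, y ≤_Q f` and `f → x, f → y ∈ F`. -/
def cong (F : Set X) (x y : X) : Prop :=
  ∃ f : X, A.leQ x f ∧ A.leQ y f ∧ A.imp f x ∈ F ∧ A.imp f y ∈ F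

end InvBE

namespace InvBE

variable {X : Type*} (A : InvBE X)

theorem neg_neg' (x : X) : A.neg (A.neg x) = x := A.imp_involutive x

/-- In an IOM algebra, `x ≤_Q y` forces `y` to be an implication with consequent `x`. -/
theorem eq_imp_of_leQ (hA : A.IOM) {x y : X} (h : A.leQ x y) :
    A.imp (A.imp y x) x = y := by
  have contra : A.imp (A.neg x) (A.neg y) = A.imp y x := by
    rw [neg, neg, A.exchange, A.imp_involutive]
  have hx : A.imp (A.imp y x) (A.neg y) = A.neg x := by
    have h' := congrArg A.neg h
    rw [inf, neg_neg', contra] at h'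
    exact h'.symm
  have hy := congrArg A.neg (hA (A.neg y) (A.imp y x))
  rwa [hx, inf, neg_neg', neg_neg', neg_neg'] at hy

end InvBE

/-- A nonempty subset `F` of an IOM algebra is a filter iff it satisfies (F₁) and (F₃). -/
theorem stmt_14 {X : Type*} (A : InvBE X) (hA : A.IOM) :
    ∀ F : Set X, F.Nonempty →
      (A.IsFilter F ↔
        ((∀ x ∈ F, ∀ y ∈ F, A.odot x y ∈ F) ∧
          (∀ x ∈ F, ∀ y : X, A.imp y x ∈ F))) := by
  intro F hF
  constructor
  · rintro ⟨_, h1, h2⟩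
    exact ⟨h1, fun x hx y => h2 x hx _ (hA x y).symm⟩
  · rintro ⟨h1, h3⟩
    refine ⟨hF, h1, fun x hx y hxy => ?_⟩
    rw [← A.eq_imp_of_leQ hA hxy]
    exact h3 x hx _
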